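/- arXiv:1201.0713 — 3 statements merged into one kernel-verified Lean document; each statement's English description precedes it below -/
import Mathlib

section
/- For every positive integer n, (1*λ_odd)(n) = Σ_{d|n} 2^{ν(d)} λ_odd(d) τ_odd(n/d), where the sum is over all positive divisors d of n. -/
/-- The Liouville function `λ(n) = (-1)^Ω(n)`. -/
def liouville (n : ℕ) : ℤ := (-1) ^ (ArithmeticFunction.cardFactors n)

/-- `λ_odd(n) = λ(n)` for odd `n`, and `0` for even `n`. -/
def lambdaOdd (n : ℕ) : ℤ := if Odd n then liouville n else 0

/-- `τ_odd(n)`, the number of odd divisors of `n`. -/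
def tauOdd (n : ℕ) : ℕ := (n.divisors.filter fun d => Odd d).card

/-!
On a prime power, `∑_{i ≤ k} 2^{ω(pⁱ)} λ(pⁱ) = 1 + 2 ∑_{1 ≤ i ≤ k} (-1)^i = (-1)^k`, so
`(2^ω λ) * 1 = λ` by multiplicativity. Pointwise multiplication by a completely multiplicative `h`
distributes over Dirichlet convolution, hence `(2^ω λ h) * h = λ h`; convolving with `1` gives
`1 * λ h = (2^ω λ h) * (h * 1)`. For the indicator `h` of the odd numbers, `λ h = λ_odd` and
`h * 1 = τ_odd`.
-/

section

open ArithmeticFunction hiding liouville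
open scoped ArithmeticFunction.zeta ArithmeticFunction.omega

theorem pmul_mul_distrib_of_map_mul {R : Type*} [CommSemiring R] {h : ArithmeticFunction R}
    (hmul : ∀ m n, h (m * n) = h m * h n) (f g : ArithmeticFunction R) :
    h.pmul (f * g) = h.pmul f * h.pmul g := by
  ext n
  simp only [pmul_apply, mul_apply, Finset.mul_sum]
  refine Finset.sum_congr rfl fun x hx ↦ ?_
  rw [← (Nat.mem_divisorsAntidiagonal.mp hx).1, hmul, mul_mul_mul_comm]

/-- The arithmetic function `2^ω λ`, the convolution quotient of the Liouville function `λ` by `1`.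
It is built on Mathlib's `λ`, which vanishes at `0`, unlike `liouville`. -/
def twoPowOmegaLiouville : ArithmeticFunction ℤ :=
  ⟨fun n ↦ 2 ^ ω n * ArithmeticFunction.liouville n, by simp⟩

theorem twoPowOmegaLiouville_apply (n : ℕ) :
    twoPowOmegaLiouville n = 2 ^ ω n * ArithmeticFunction.liouville n :=
  rfl

theorem isMultiplicative_twoPowOmegaLiouville : twoPowOmegaLiouville.IsMultiplicative := by
  refine ⟨by simp [twoPowOmegaLiouville_apply, liouville_apply_one], fun {m n} hmn ↦ ?_⟩
  simp only [twoPowOmegaLiouville_apply, cardDistinctFactors_mul hmn, liouville_apply_mul, pow_add]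
  exact mul_mul_mul_comm ..

theorem liouville_apply_prime_pow {p : ℕ} (hp : p.Prime) (k : ℕ) :
    ArithmeticFunction.liouville (p ^ k) = (-1) ^ k := by
  rw [liouville_apply (pow_ne_zero k hp.ne_zero), cardFactors_apply_prime_pow hp]

theorem sum_twoPowOmegaLiouville_prime_pow {p : ℕ} (hp : p.Prime) (k : ℕ) :
    ∑ i ∈ Finset.range (k + 1), twoPowOmegaLiouville (p ^ i) = (-1) ^ k := by
  induction k with
  | zero => simp [isMultiplicative_twoPowOmegaLiouville.map_one]
  | succ k ih =>
    rw [Finset.sum_range_succ, ih, twoPowOmegaLiouville_apply, liouville_apply_prime_pow hp,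
      cardDistinctFactors_apply_prime_pow hp k.succ_ne_zero]
    ring

theorem twoPowOmegaLiouville_mul_zeta :
    twoPowOmegaLiouville * (ζ : ArithmeticFunction ℤ) = ArithmeticFunction.liouville := by
  refine (IsMultiplicative.eq_iff_eq_on_prime_powers _
    (isMultiplicative_twoPowOmegaLiouville.mul isMultiplicative_zeta.natCast) _
    isMultiplicative_liouville).mpr fun p k hp ↦ ?_
  rw [coe_mul_zeta_apply, Nat.sum_divisors_prime_pow hp, sum_twoPowOmegaLiouville_prime_pow hp,
    liouville_apply_prime_pow hp]

theorem pmul_liouville_eq_mul {R : Type*} [CommRing R] {h : ArithmeticFunction R}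
    (hmul : ∀ m n, h (m * n) = h m * h n) :
    h.pmul (ArithmeticFunction.liouville : ArithmeticFunction R) =
      h.pmul (twoPowOmegaLiouville : ArithmeticFunction R) * h := by
  rw [← twoPowOmegaLiouville_mul_zeta, intCoe_mul, coe_coe,
    pmul_mul_distrib_of_map_mul hmul, pmul_zeta]

theorem stmt4_general {R : Type*} [CommRing R] {h : ArithmeticFunction R}
    (hmul : ∀ m n, h (m * n) = h m * h n) (n : ℕ) :
    ∑ d ∈ n.divisors, h d * (ArithmeticFunction.liouville d : R) =
      ∑ d ∈ n.divisors, 2 ^ ω d * (h d * (ArithmeticFunction.liouville d : R)) *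
        ∑ e ∈ (n / d).divisors, h e := by
  let lam : ArithmeticFunction R := ArithmeticFunction.liouville
  let F : ArithmeticFunction R := twoPowOmegaLiouville
  calc
    _ = (h.pmul lam * (ζ : ArithmeticFunction R)) n := by
      simp only [coe_mul_zeta_apply, pmul_apply, intCoe_apply, lam]
    _ = (h.pmul F * (h * (ζ : ArithmeticFunction R))) n := by
      rw [pmul_liouville_eq_mul hmul, mul_assoc]
    _ = ∑ d ∈ n.divisors, h.pmul F d * (h * (ζ : ArithmeticFunction R)) (n / d) := by
      rw [mul_apply, Nat.sum_divisorsAntidiagonal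
        fun a b ↦ h.pmul F a * (h * (ζ : ArithmeticFunction R)) b]
    _ = _ := by
      refine Finset.sum_congr rfl fun d _ ↦ ?_
      rw [coe_mul_zeta_apply, pmul_apply, intCoe_apply, twoPowOmegaLiouville_apply]
      push_cast
      ring

/-- The indicator function of the odd numbers, i.e. the principal character modulo `2`, as the
completely multiplicative function that turns `λ` into `λ_odd`. -/
def oddIndicator : ArithmeticFunction ℤ := ⟨fun n ↦ if Odd n then 1 else 0, by simp⟩

theorem oddIndicator_apply (n : ℕ) : oddIndicator n = if Odd n then 1 else 0 :=
  rfl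

theorem oddIndicator_apply_mul (m n : ℕ) :
    oddIndicator (m * n) = oddIndicator m * oddIndicator n := by
  simp only [oddIndicator_apply, Nat.odd_mul, ite_and, ite_mul, one_mul, zero_mul]

theorem lambdaOdd_eq_oddIndicator_mul_liouville (n : ℕ) :
    lambdaOdd n = oddIndicator n * ArithmeticFunction.liouville n := by
  rw [lambdaOdd, oddIndicator_apply, ite_mul, one_mul, zero_mul]
  split_ifs with hn
  · rw [liouville, liouville_apply hn.pos.ne']
  · rfl

theorem natCast_tauOdd (n : ℕ) : (tauOdd n : ℤ) = ∑ d ∈ n.divisors, oddIndicator d := by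
  simp only [tauOdd, oddIndicator_apply, Finset.sum_boole]

end

/-- `(1 * λ_odd)(n) = Σ_{d ∣ n} 2^{ν(d)} λ_odd(d) τ_odd(n/d)`. -/
theorem stmt4 (n : ℕ) (hn : 0 < n) :
    (∑ d ∈ n.divisors, lambdaOdd d) =
      ∑ d ∈ n.divisors,
        2 ^ (ArithmeticFunction.cardDistinctFactors d) * lambdaOdd d *
          (tauOdd (n / d) : ℤ) := by
  simpa only [lambdaOdd_eq_oddIndicator_mul_liouville, natCast_tauOdd, Int.cast_id] using
    stmt4_general oddIndicator_apply_mul n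
end

section
/- Let ρ = β + iγ be a complex number with 7/8 < β ≤ 1, and let δ be the unique real number with −π < δ ≤ π such that γ·log 2 = 2πn + δ for some integer n; assume |δ| > π/100. Then for every real U ≥ 10, (1/25)·ζ(4β)/ζ(2β) − U^{6−12β} ≤ | Σ_{n ≤ U^{12}} (−1)^n (1*λ_odd)(n)/n^ρ |. -/
open Complex

/-! The function `1 * λ` is the indicator of the squares, so `1 * λ_odd` is the indicator of the
numbers `2 ^ a * m ^ 2` with `m` odd. With `z = 2 ^ (-ρ)`, summing the geometric series in `a` (the
sign `(-1) ^ n` only affects `a = 0`) shows that the full Dirichlet series equals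
`(2 * z - 1) * (1 + z) * ζ(2 * ρ)`. The Euler product gives `|ζ(2 * ρ)| ≥ ζ(4 * β) / ζ(2 * β)`.
Since `|z| ≤ 3 / 4`, the factor `(2 * z - 1) * (1 + z)` can be small only if `z` is close to
`1 / 2`, which is excluded because `arg z` is bounded away from `0`: writing `c` for the
cosine of `arg z`, its squared modulus is at least `(1 - c ^ 2) * (1 + 3 / 4 * c ^ 2)`
when `c ≥ 0`. This leaves a modulus slightly larger than `1 / 25`, and the surplus absorbs
the tail of the series beyond `N ≥ 10 ^ 12`. -/

lemma isSquare_mul_iff_of_coprime {m n : ℕ} (h : m.Coprime n) :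
    IsSquare (m * n) ↔ IsSquare m ∧ IsSquare n := by
  refine ⟨fun hmn => ?_, fun ⟨hm, hn⟩ => hm.mul hn⟩
  obtain ⟨k, hk⟩ := isSquare_iff_exists_sq _ |>.mp hmn
  obtain ⟨i, hi⟩ := exists_eq_pow_of_mul_eq_pow (Nat.isUnit_iff.mpr h) hk
  obtain ⟨j, hj⟩ := exists_eq_pow_of_mul_eq_pow (Nat.isUnit_iff.mpr h.symm) (mul_comm m n ▸ hk)
  exact ⟨hi ▸ IsSquare.sq i, hj ▸ IsSquare.sq j⟩

lemma isSquare_prime_pow_iff {p k : ℕ} (hp : p.Prime) : IsSquare (p ^ k) ↔ Even k := by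
  refine ⟨fun h => ?_, fun h => h.isSquare_pow p⟩
  obtain ⟨r, hr⟩ := isSquare_iff_exists_sq _ |>.mp h
  have hk : k = 2 * r.factorization p := by
    simpa [hp.factorization_self] using congrArg (fun n => n.factorization p) hr
  exact hk ▸ even_two_mul _

/-- The indicator function of the perfect squares, as the value of `1 * λ`; it vanishes at `0`, as
every arithmetic function does. -/
def squareIndicator : ArithmeticFunction ℤ :=
  ⟨fun n => if n ≠ 0 ∧ IsSquare n then 1 else 0, by simp⟩

lemma squareIndicator_apply {n : ℕ} (hn : n ≠ 0) :
    squareIndicator n = if IsSquare n then 1 else 0 := by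
  simp [squareIndicator, hn]

lemma isMultiplicative_squareIndicator : squareIndicator.IsMultiplicative := by
  refine ArithmeticFunction.IsMultiplicative.iff_ne_zero.mpr
    ⟨by simp [squareIndicator], fun hm hn h => ?_⟩
  rw [squareIndicator_apply hm, squareIndicator_apply hn, squareIndicator_apply (mul_ne_zero hm hn)]
  simp only [isSquare_mul_iff_of_coprime h, ite_and, ite_zero_mul_ite_zero, mul_one]

open ArithmeticFunction in
lemma zeta_mul_liouville : (zeta : ArithmeticFunction ℤ) * ArithmeticFunction.liouville =
    squareIndicator := by
  refine (IsMultiplicative.eq_iff_eq_on_prime_powers _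
    (isMultiplicative_zeta.natCast.mul isMultiplicative_liouville) _
    isMultiplicative_squareIndicator).mpr fun p k hp => ?_
  have hpow (i : ℕ) : ArithmeticFunction.liouville (p ^ i) = (-1) ^ i := by
    rw [liouville_apply (pow_ne_zero i hp.ne_zero), cardFactors_apply_prime_pow hp]
  rw [coe_zeta_mul_apply, Nat.sum_divisors_prime_pow hp, Finset.sum_congr rfl fun i _ => hpow i,
    neg_one_geom_sum, squareIndicator_apply (pow_ne_zero k hp.ne_zero)]
  simp only [Nat.even_add_one, isSquare_prime_pow_iff hp, ite_not]

lemma sum_divisors_liouville {n : ℕ} (hn : n ≠ 0) :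
    ∑ d ∈ n.divisors, liouville d = if IsSquare n then 1 else 0 := by
  rw [← squareIndicator_apply hn, ← zeta_mul_liouville, ArithmeticFunction.coe_zeta_mul_apply]
  exact Finset.sum_congr rfl fun d hd =>
    (ArithmeticFunction.liouville_apply (Nat.pos_of_mem_divisors hd).ne').symm

lemma filter_odd_divisors_two_pow_mul (a : ℕ) {m : ℕ} (hm : Odd m) :
    (2 ^ a * m).divisors.filter Odd = m.divisors := by
  ext d
  simp only [Finset.mem_filter, Nat.mem_divisors]
  constructor
  · rintro ⟨⟨hd, -⟩, hodd⟩
    exact ⟨(hodd.coprime_two_right.pow_right a).dvd_of_dvd_mul_left hd, hm.pos.ne'⟩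
  · rintro ⟨hd, -⟩
    exact ⟨⟨hd.mul_left _, mul_ne_zero (by positivity) hm.pos.ne'⟩, hm.of_dvd_nat hd⟩

lemma sum_divisors_lambdaOdd_two_pow_mul (a : ℕ) {m : ℕ} (hm : Odd m) :
    ∑ d ∈ (2 ^ a * m).divisors, lambdaOdd d = if IsSquare m then 1 else 0 := by
  simp only [lambdaOdd]
  rw [← Finset.sum_filter, filter_odd_divisors_two_pow_mul a hm,
    sum_divisors_liouville hm.pos.ne']

/-- The map `(a, j) ↦ 2 ^ a * (2 * j + 1) ^ 2`, which parametrizes the support of `1 * λ_odd`. -/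
def twoPowMulOddSq (x : ℕ × ℕ) : ℕ := 2 ^ x.1 * (2 * x.2 + 1) ^ 2

lemma odd_two_mul_add_one_sq (j : ℕ) : Odd ((2 * j + 1) ^ 2) := (odd_two_mul_add_one j).pow

lemma twoPowMulOddSq_pos (x : ℕ × ℕ) : 0 < twoPowMulOddSq x := by
  unfold twoPowMulOddSq; positivity

lemma twoPowMulOddSq_injective : Function.Injective twoPowMulOddSq := by
  rintro ⟨a, j⟩ ⟨b, i⟩ h
  have hfac (a j : ℕ) : (twoPowMulOddSq (a, j)).factorization 2 = a := by
    have hodd : (2 * j + 1).factorization 2 = 0 :=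
      Nat.factorization_eq_zero_of_not_dvd (odd_two_mul_add_one j).not_two_dvd_nat
    simp [twoPowMulOddSq, Nat.factorization_mul, hodd, Nat.prime_two.factorization_self]
  obtain rfl : a = b := by rw [← hfac a j, h, hfac]
  have hsq : (2 * j + 1) ^ 2 = (2 * i + 1) ^ 2 := Nat.eq_of_mul_eq_mul_left (by positivity) h
  have := Nat.pow_left_injective two_ne_zero hsq
  simp_all

lemma sum_divisors_lambdaOdd_twoPowMulOddSq (x : ℕ × ℕ) :
    ∑ d ∈ (twoPowMulOddSq x).divisors, lambdaOdd d = 1 := by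
  rw [twoPowMulOddSq, sum_divisors_lambdaOdd_two_pow_mul _ (odd_two_mul_add_one_sq x.2),
    if_pos (IsSquare.sq _)]

lemma sum_divisors_lambdaOdd_eq_zero {n : ℕ} (hn : n ∉ Set.range twoPowMulOddSq) :
    ∑ d ∈ n.divisors, lambdaOdd d = 0 := by
  rcases eq_or_ne n 0 with rfl | hn0
  · simp
  obtain ⟨a, m, hm, rfl⟩ := Nat.exists_eq_two_pow_mul_odd hn0
  rw [sum_divisors_lambdaOdd_two_pow_mul a hm, if_neg]
  intro hsq
  obtain ⟨k, rfl⟩ := isSquare_iff_exists_sq _ |>.mp hsq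
  obtain ⟨j, rfl⟩ := (Nat.odd_pow_iff two_ne_zero).mp hm
  exact hn ⟨(a, j), rfl⟩

lemma sum_Ioc_rpow_neg_le {s : ℝ} (hs : 1 < s) {m n : ℕ} (hm : m ≠ 0) :
    ∑ k ∈ Finset.Ioc m n, (k : ℝ) ^ (-s) ≤ (m : ℝ) ^ (1 - s) / (s - 1) := by
  have hm0 : (0 : ℝ) < m := by positivity
  rcases le_total n m with hnm | hmn
  · rw [Finset.Ioc_eq_empty_of_le hnm, Finset.sum_empty]
    exact div_nonneg (by positivity) (by linarith)
  have hanti : AntitoneOn (fun x : ℝ => x ^ (-s)) (Set.Icc m n) := fun x hx y _ hxy =>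
    Real.rpow_le_rpow_of_nonpos (hm0.trans_le hx.1) hxy (by linarith)
  have h0 : (0 : ℝ) ∉ Set.uIcc (m : ℝ) n := by
    rw [Set.uIcc_of_le (by exact_mod_cast hmn)]
    exact fun h => hm0.not_ge h.1
  calc ∑ k ∈ Finset.Ioc m n, (k : ℝ) ^ (-s)
      = ∑ k ∈ Finset.Ico m n, ((k + 1 : ℕ) : ℝ) ^ (-s) := by
        rw [Finset.sum_Ico_add' (fun k : ℕ => (k : ℝ) ^ (-s)) m n 1]
        rw [Finset.Ico_add_one_add_one_eq_Ioc]
    _ ≤ ∫ x in (m : ℝ)..n, x ^ (-s) := hanti.sum_le_integral_Ico hmn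
    _ = ((m : ℝ) ^ (1 - s) - (n : ℝ) ^ (1 - s)) / (s - 1) := by
        rw [integral_rpow (Or.inr ⟨by linarith, h0⟩), neg_add_eq_sub, ← neg_div_neg_eq]
        simp only [neg_sub]
    _ ≤ (m : ℝ) ^ (1 - s) / (s - 1) :=
        div_le_div_of_nonneg_right (sub_le_self _ (by positivity)) (by linarith)

lemma summable_nat_rpow_neg {s : ℝ} (hs : 1 < s) : Summable fun k : ℕ => (k : ℝ) ^ (-s) :=
  Real.summable_nat_rpow.mpr (by linarith)

lemma tsum_indicator_rpow_neg_le {s : ℝ} (hs : 1 < s) {y : ℝ} (hy : 0 < y) :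
    ∑' k : ℕ, {k : ℕ | y ≤ k}.indicator (fun k => (k : ℝ) ^ (-s)) k ≤
      s / (s - 1) * y ^ (1 - s) := by
  have hs1 : 0 < s - 1 := by linarith
  set m := ⌈y⌉₊
  have hm : m ≠ 0 := (Nat.ceil_pos.mpr hy).ne'
  have hm1 : (1 : ℝ) ≤ m := by exact_mod_cast Nat.one_le_iff_ne_zero.mpr hm
  refine Real.tsum_le_of_sum_range_le
    (fun k => Set.indicator_nonneg (fun _ _ => by positivity) k) fun n => ?_
  calc ∑ k ∈ Finset.range n, {k : ℕ | y ≤ k}.indicator (fun k => (k : ℝ) ^ (-s)) k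
      = ∑ k ∈ (Finset.range n).filter (fun k : ℕ => y ≤ k), (k : ℝ) ^ (-s) := by
        simp only [Finset.sum_filter, Set.indicator_apply, Set.mem_ofPred_eq]
    _ ≤ ∑ k ∈ insert m (Finset.Ioc m n), (k : ℝ) ^ (-s) := by
        refine Finset.sum_le_sum_of_subset_of_nonneg (fun k hk => ?_) fun _ _ _ => by positivity
        rw [Finset.mem_filter, Finset.mem_range] at hk
        have hmk : m ≤ k := Nat.ceil_le.mpr hk.2
        rw [Finset.mem_insert, Finset.mem_Ioc]
        lia
    _ = (m : ℝ) ^ (-s) + ∑ k ∈ Finset.Ioc m n, (k : ℝ) ^ (-s) :=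
        Finset.sum_insert (by simp)
    _ ≤ (m : ℝ) ^ (1 - s) + (m : ℝ) ^ (1 - s) / (s - 1) :=
        add_le_add (Real.rpow_le_rpow_of_exponent_le hm1 (by linarith))
          (sum_Ioc_rpow_neg_le hs hm)
    _ = s / (s - 1) * (m : ℝ) ^ (1 - s) := by
        field_simp
        ring
    _ ≤ s / (s - 1) * y ^ (1 - s) := by
        have := Real.rpow_le_rpow_of_nonpos hy (Nat.le_ceil y) (by linarith : 1 - s ≤ 0)
        gcongr

lemma norm_riemannZeta_le {s : ℂ} (hs : 1 < s.re) : ‖riemannZeta s‖ ≤ s.re / (s.re - 1) := by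
  have hterm (k : ℕ) : ‖1 / (k : ℂ) ^ s‖ =
      {k : ℕ | (1 : ℝ) ≤ k}.indicator (fun k => (k : ℝ) ^ (-s.re)) k := by
    rcases k.eq_zero_or_pos with rfl | hk
    · simp [ne_zero_of_one_lt_re hs]
    · rw [Set.indicator_of_mem (by exact_mod_cast hk), one_div, ← cpow_neg,
        norm_natCast_cpow_of_pos hk, neg_re]
  rw [zeta_eq_tsum_one_div_nat_cpow hs]
  calc ‖∑' k : ℕ, 1 / (k : ℂ) ^ s‖ ≤ ∑' k : ℕ, ‖1 / (k : ℂ) ^ s‖ :=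
        norm_tsum_le_tsum_norm (by
          simpa only [hterm] using (summable_nat_rpow_neg hs).indicator _)
    _ ≤ s.re / (s.re - 1) := by
        simpa only [hterm, Real.one_rpow, mul_one] using tsum_indicator_rpow_neg_le hs one_pos

lemma one_le_re_riemannZeta {σ : ℝ} (hσ : 1 < σ) : 1 ≤ (riemannZeta σ).re := by
  have hterm (k : ℕ) : (1 / (k : ℂ) ^ (σ : ℂ)).re = 1 / (k : ℝ) ^ σ := by
    rw [← ofReal_natCast, ← ofReal_cpow k.cast_nonneg, ← ofReal_one, ← ofReal_div, ofReal_re]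
  have hsum : Summable fun k : ℕ => 1 / (k : ℂ) ^ (σ : ℂ) :=
    summable_one_div_nat_cpow.mpr (by simpa using hσ)
  have hre : (riemannZeta σ).re = ∑' k : ℕ, 1 / (k : ℝ) ^ σ := by
    rw [zeta_eq_tsum_one_div_nat_cpow (by simpa using hσ), re_tsum hsum]
    exact tsum_congr hterm
  rw [hre]
  simpa using (Real.summable_one_div_nat_rpow.mpr hσ).le_tsum 1 fun k _ => by positivity

lemma norm_riemannZeta_ofReal {σ : ℝ} (hσ : 1 < σ) : ‖riemannZeta σ‖ = (riemannZeta σ).re := by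
  rw [← abs_re_eq_norm.mpr (riemannZeta_im_eq_zero_of_one_lt hσ),
    abs_of_pos (riemannZeta_re_pos_of_one_lt hσ)]

lemma norm_inv_one_sub_norm_sq_le {w : ℂ} (hw : ‖w‖ < 1) :
    ‖(1 - (‖w‖ : ℂ) ^ 2)⁻¹‖ ≤ ‖(1 - w)⁻¹‖ * ‖(1 - (‖w‖ : ℂ))⁻¹‖ := by
  have hpos : 0 < ‖1 - w‖ := norm_pos_iff.mpr (sub_ne_zero.mpr fun h => by simp [← h] at hw)
  have hle : ‖1 - w‖ ≤ ‖1 + (‖w‖ : ℂ)‖ := by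
    have hone : ‖1 + (‖w‖ : ℂ)‖ = 1 + ‖w‖ := by
      rw [← ofReal_one, ← ofReal_add, norm_real, Real.norm_of_nonneg (by positivity)]
    simpa [hone] using norm_sub_le 1 w
  have hfac : 1 - (‖w‖ : ℂ) ^ 2 = (1 + ‖w‖) * (1 - ‖w‖) := by ring
  simp only [hfac, norm_inv, norm_mul, mul_inv]
  gcongr

lemma norm_riemannZeta_two_mul_re_le {s : ℂ} (hs : 1 < s.re) :
    ‖riemannZeta (2 * s.re : ℝ)‖ ≤ ‖riemannZeta s‖ * ‖riemannZeta s.re‖ := by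
  have hprod {t : ℂ} (ht : 1 < t.re) := (riemannZeta_eulerProduct ht).norm
  refine le_of_tendsto_of_tendsto' (hprod (by rw [ofReal_re]; linarith))
    ((hprod hs).mul (hprod (by rwa [ofReal_re]))) fun n => ?_
  simp only [norm_prod, ← Finset.prod_mul_distrib]
  refine Finset.prod_le_prod (fun _ _ => norm_nonneg _) fun p hp => ?_
  have hp : p.Prime := Nat.prime_of_mem_primesBelow hp
  have hnorm : ‖(p : ℂ) ^ (-s)‖ = (p : ℝ) ^ (-s.re) := by
    rw [norm_natCast_cpow_of_pos hp.pos, neg_re]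
  have hre : (p : ℂ) ^ (-(s.re : ℂ)) = (‖(p : ℂ) ^ (-s)‖ : ℂ) := by
    rw [hnorm, ofReal_cpow p.cast_nonneg, ofReal_natCast, ofReal_neg]
  have hsq : (p : ℂ) ^ (-((2 * s.re : ℝ) : ℂ)) = (‖(p : ℂ) ^ (-s)‖ : ℂ) ^ 2 := by
    rw [← hre, ← cpow_nat_mul]
    congr 1
    push_cast
    ring
  rw [hre, hsq]
  refine norm_inv_one_sub_norm_sq_le (hnorm ▸ ?_)
  exact Real.rpow_lt_one_of_one_lt_of_neg (by exact_mod_cast hp.one_lt) (by linarith)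

lemma re_riemannZeta_div_le {s : ℂ} (hs : 1 < s.re) :
    (riemannZeta (2 * s.re : ℝ)).re / (riemannZeta s.re).re ≤ ‖riemannZeta s‖ := by
  rw [div_le_iff₀ (riemannZeta_re_pos_of_one_lt hs), ← norm_riemannZeta_ofReal hs,
    ← norm_riemannZeta_ofReal (by linarith)]
  exact norm_riemannZeta_two_mul_re_le hs

lemma tsum_indicator_odd_sq_rpow_neg_le {σ : ℝ} (hσ : 1 / 2 < σ) {Y : ℝ} (hY : 0 < Y) :
    ∑' j : ℕ, {j : ℕ | Y ≤ (2 * j + 1) ^ 2}.indicator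
        (fun j : ℕ => (((2 * j + 1) ^ 2 : ℕ) : ℝ) ^ (-σ)) j ≤
      2 * σ / (2 * σ - 1) * Y ^ (1 / 2 - σ) := by
  have hσ' : 1 < 2 * σ := by linarith
  set f : ℕ → ℝ := {k : ℕ | √Y ≤ k}.indicator fun k => (k : ℝ) ^ (-(2 * σ))
  have hf : Summable f := (summable_nat_rpow_neg hσ').indicator _
  have hf0 (k : ℕ) : 0 ≤ f k := Set.indicator_nonneg (fun _ _ => by positivity) k
  have hodd : Function.Injective fun j : ℕ => 2 * j + 1 := fun i j h => by simpa using h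
  have hsq (j : ℕ) : {j : ℕ | Y ≤ (2 * j + 1) ^ 2}.indicator
      (fun j : ℕ => (((2 * j + 1) ^ 2 : ℕ) : ℝ) ^ (-σ)) j = f (2 * j + 1) := by
    have hpow : (((2 * j + 1) ^ 2 : ℕ) : ℝ) ^ (-σ) = ((2 * j + 1 : ℕ) : ℝ) ^ (-(2 * σ)) := by
      rw [Nat.cast_pow, ← Real.rpow_natCast_mul (by positivity)]
      norm_num
    have hiff : √Y ≤ ((2 * j + 1 : ℕ) : ℝ) ↔ Y ≤ (2 * j + 1) ^ 2 := by
      rw [Real.sqrt_le_left (by positivity)]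
      push_cast
      rfl
    simp only [f, Set.indicator_apply, Set.mem_ofPred_eq, hiff, hpow]
  calc _ = ∑' j : ℕ, f (2 * j + 1) := tsum_congr hsq
    _ ≤ ∑' k : ℕ, f k := tsum_comp_le_tsum_of_inj hf hf0 hodd
    _ ≤ 2 * σ / (2 * σ - 1) * √Y ^ (1 - 2 * σ) :=
        tsum_indicator_rpow_neg_le hσ' (Real.sqrt_pos.mpr hY)
    _ = 2 * σ / (2 * σ - 1) * Y ^ (1 / 2 - σ) := by
        rw [Real.sqrt_eq_rpow, ← Real.rpow_mul hY.le]
        ring_nf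

lemma twoPowMulOddSq_rpow (σ : ℝ) (x : ℕ × ℕ) :
    (twoPowMulOddSq x : ℝ) ^ σ = ((2 : ℝ) ^ σ) ^ x.1 * (((2 * x.2 + 1) ^ 2 : ℕ) : ℝ) ^ σ := by
  rw [twoPowMulOddSq, Nat.cast_mul, Real.mul_rpow (by positivity) (by positivity), Nat.cast_pow,
    Nat.cast_ofNat, ← Real.rpow_pow_comm zero_le_two]

lemma two_rpow_neg_lt_one {σ : ℝ} (hσ : 0 < σ) : (2 : ℝ) ^ (-σ) < 1 :=
  Real.rpow_lt_one_of_one_lt_of_neg one_lt_two (by linarith)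

lemma summable_odd_sq_rpow_neg {σ : ℝ} (hσ : 1 / 2 < σ) :
    Summable fun j : ℕ => (((2 * j + 1) ^ 2 : ℕ) : ℝ) ^ (-σ) := by
  refine ((summable_nat_rpow_neg (by linarith : 1 < 2 * σ)).comp_injective
    (i := fun j => 2 * j + 1) fun i j h => by simpa using h).congr fun j => ?_
  rw [Function.comp_apply, Nat.cast_pow, ← Real.rpow_natCast_mul (by positivity)]
  norm_num

lemma summable_twoPowMulOddSq_rpow_neg {σ : ℝ} (hσ : 1 / 2 < σ) :
    Summable fun x => (twoPowMulOddSq x : ℝ) ^ (-σ) := by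
  simp only [twoPowMulOddSq_rpow]
  exact (summable_geometric_of_lt_one (by positivity)
    (two_rpow_neg_lt_one (by linarith))).mul_of_nonneg
    (summable_odd_sq_rpow_neg hσ) (fun _ => by positivity) fun _ => by positivity

/-- The bound for the tail over `twoPowMulOddSq x ≥ X` of the series of `(twoPowMulOddSq x) ^ (-σ)`
that follows from comparison with an integral on each dyadic layer `2 ^ a * (2 * j + 1) ^ 2`. -/
noncomputable def tailBound (σ X : ℝ) : ℝ :=
  2 * σ / (2 * σ - 1) * X ^ (1 / 2 - σ) * (1 - (2 : ℝ) ^ (-(1 / 2) : ℝ))⁻¹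

lemma tsum_indicator_twoPowMulOddSq_rpow_neg_le {σ : ℝ} (hσ : 1 / 2 < σ) {X : ℝ} (hX : 0 < X) :
    ∑' x, {x | X ≤ twoPowMulOddSq x}.indicator (fun x => (twoPowMulOddSq x : ℝ) ^ (-σ)) x ≤
      tailBound σ X := by
  set q : ℝ := (2 : ℝ) ^ (-(1 / 2) : ℝ)
  have hq : q < 1 := two_rpow_neg_lt_one one_half_pos
  have hq0 : 0 ≤ q := by positivity
  set f : ℕ × ℕ → ℝ :=
    {x | X ≤ twoPowMulOddSq x}.indicator fun x => (twoPowMulOddSq x : ℝ) ^ (-σ)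
  have hf : Summable f := (summable_twoPowMulOddSq_rpow_neg hσ).indicator _
  have hfiber (a : ℕ) :
      ∑' j, f (a, j) ≤ 2 * σ / (2 * σ - 1) * X ^ (1 / 2 - σ) * q ^ a := by
    have hterm (j : ℕ) : f (a, j) = ((2 : ℝ) ^ (-σ)) ^ a *
        {j : ℕ | X / 2 ^ a ≤ (2 * j + 1) ^ 2}.indicator
          (fun j : ℕ => (((2 * j + 1) ^ 2 : ℕ) : ℝ) ^ (-σ)) j := by
      have hiff : X ≤ twoPowMulOddSq (a, j) ↔ X / 2 ^ a ≤ (2 * j + 1) ^ 2 := by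
        rw [div_le_iff₀' (by positivity), twoPowMulOddSq]
        push_cast
        rfl
      simp only [f, Set.indicator_apply, Set.mem_ofPred_eq, hiff, twoPowMulOddSq_rpow, mul_ite,
        mul_zero]
    calc ∑' j, f (a, j) ≤ ((2 : ℝ) ^ (-σ)) ^ a *
          (2 * σ / (2 * σ - 1) * (X / 2 ^ a) ^ (1 / 2 - σ)) := by
          rw [tsum_congr hterm, tsum_mul_left]
          gcongr
          exact tsum_indicator_odd_sq_rpow_neg_le hσ (by positivity)
      _ = 2 * σ / (2 * σ - 1) * X ^ (1 / 2 - σ) * ((2 : ℝ) ^ (-σ) / 2 ^ (1 / 2 - σ)) ^ a := by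
          rw [Real.div_rpow hX.le (by positivity), ← Real.rpow_pow_comm zero_le_two]
          ring
      _ = 2 * σ / (2 * σ - 1) * X ^ (1 / 2 - σ) * q ^ a := by
          rw [← Real.rpow_sub two_pos, show -σ - (1 / 2 - σ) = -(1 / 2) by ring]
  calc ∑' x, f x = ∑' a, ∑' j, f (a, j) := hf.tsum_prod
    _ ≤ ∑' a, 2 * σ / (2 * σ - 1) * X ^ (1 / 2 - σ) * q ^ a :=
        hf.prod.tsum_le_tsum hfiber ((summable_geometric_of_lt_one hq0 hq).mul_left _)
    _ = tailBound σ X := by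
        rw [tsum_mul_left, tsum_geometric_of_lt_one hq0 hq, tailBound]

/-- The `n`-th term `(-1) ^ n * (1 * λ_odd)(n) / n ^ ρ` of the Dirichlet series whose partial sums
are to be bounded from below. -/
noncomputable def alternatingTerm (ρ : ℂ) (n : ℕ) : ℂ :=
  ((-1 : ℂ) ^ n * ((∑ d ∈ n.divisors, lambdaOdd d : ℤ) : ℂ)) / (n : ℂ) ^ ρ

lemma alternatingTerm_eq_zero (ρ : ℂ) {n : ℕ} (hn : n ∉ Set.range twoPowMulOddSq) :
    alternatingTerm ρ n = 0 := by
  rw [alternatingTerm, sum_divisors_lambdaOdd_eq_zero hn, Int.cast_zero, mul_zero, zero_div]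

lemma alternatingTerm_twoPowMulOddSq (ρ : ℂ) (x : ℕ × ℕ) :
    alternatingTerm ρ (twoPowMulOddSq x) =
      (-1) ^ 2 ^ x.1 * ((2 : ℂ) ^ (-ρ)) ^ x.1 * ((2 * x.2 + 1 : ℕ) : ℂ) ^ (-(2 * ρ)) := by
  have hsign : (-1 : ℂ) ^ twoPowMulOddSq x = (-1) ^ 2 ^ x.1 := by
    rw [twoPowMulOddSq, mul_comm, pow_mul, (odd_two_mul_add_one_sq x.2).neg_one_pow]
  have hpow (k : ℕ) (n : ℕ) : ((k ^ n : ℕ) : ℂ) ^ (-ρ) = ((k : ℂ) ^ (-ρ)) ^ n := by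
    rw [Nat.cast_pow, ← natCast_cpow_natCast_mul, cpow_nat_mul]
  have hsq (k : ℕ) : ((k : ℂ) ^ (-ρ)) ^ 2 = (k : ℂ) ^ (-(2 * ρ)) := by
    rw [← cpow_nat_mul, Nat.cast_ofNat, mul_neg]
  rw [alternatingTerm, sum_divisors_lambdaOdd_twoPowMulOddSq, hsign, Int.cast_one, mul_one,
    div_eq_mul_inv, ← cpow_neg, twoPowMulOddSq, Nat.cast_mul, natCast_mul_natCast_cpow, hpow, hpow,
    hsq, Nat.cast_ofNat, mul_assoc]

lemma norm_alternatingTerm_twoPowMulOddSq (ρ : ℂ) (x : ℕ × ℕ) :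
    ‖alternatingTerm ρ (twoPowMulOddSq x)‖ = (twoPowMulOddSq x : ℝ) ^ (-ρ.re) := by
  rw [alternatingTerm, sum_divisors_lambdaOdd_twoPowMulOddSq, Int.cast_one, mul_one, norm_div,
    norm_pow, norm_neg, norm_one, one_pow, norm_natCast_cpow_of_pos (twoPowMulOddSq_pos x),
    Real.rpow_neg (Nat.cast_nonneg _), one_div]

lemma norm_two_cpow_neg (ρ : ℂ) : ‖(2 : ℂ) ^ (-ρ)‖ = (2 : ℝ) ^ (-ρ.re) := by
  simpa using norm_natCast_cpow_of_pos two_pos (-ρ)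

lemma hasSum_neg_one_pow_two_pow_mul {z : ℂ} (hz : ‖z‖ < 1) :
    HasSum (fun a : ℕ => (-1) ^ 2 ^ a * z ^ a) ((1 - z)⁻¹ - 2) := by
  refine ((hasSum_geometric_of_norm_lt_one hz).sub (hasSum_ite_eq 0 2)).congr_fun fun a => ?_
  rcases eq_or_ne a 0 with rfl | ha
  · norm_num
  · rw [if_neg ha, (even_two.pow_of_ne_zero ha).neg_one_pow, one_mul, sub_zero]

lemma hasSum_odd_cpow_neg {s : ℂ} (hs : 1 < s.re) :
    HasSum (fun j : ℕ => ((2 * j + 1 : ℕ) : ℂ) ^ (-s)) ((1 - (2 : ℂ) ^ (-s)) * riemannZeta s) := by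
  have hsum : Summable fun k : ℕ => (k : ℂ) ^ (-s) := by
    simpa only [cpow_neg, one_div] using summable_one_div_nat_cpow.mpr hs
  have hzeta : riemannZeta s = ∑' k : ℕ, (k : ℂ) ^ (-s) := by
    simpa only [cpow_neg, one_div] using zeta_eq_tsum_one_div_nat_cpow hs
  have heven (j : ℕ) : ((2 * j : ℕ) : ℂ) ^ (-s) = (2 : ℂ) ^ (-s) * (j : ℂ) ^ (-s) := by
    rw [Nat.cast_mul, natCast_mul_natCast_cpow, Nat.cast_ofNat]
  have hodd : Summable fun j : ℕ => ((2 * j + 1 : ℕ) : ℂ) ^ (-s) :=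
    hsum.comp_injective (i := fun j => 2 * j + 1) fun i j h => by simpa using h
  have hsplit := tsum_even_add_odd (f := fun k : ℕ => (k : ℂ) ^ (-s))
    (by simpa only [heven] using hsum.mul_left _) hodd
  simp only [heven, tsum_mul_left, ← hzeta] at hsplit
  exact (eq_sub_of_add_eq' hsplit).trans (one_sub_mul _ _).symm ▸ hodd.hasSum

/-- The factor `(2 * z - 1) * (1 + z)` which, at `z = 2 ^ (-ρ)`, is the quotient of the Dirichlet
series `∑ alternatingTerm ρ n` by `ζ(2 * ρ)`. -/
def dyadicFactor (z : ℂ) : ℂ := (2 * z - 1) * (1 + z)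

lemma hasSum_alternatingTerm {ρ : ℂ} (hρ : 1 / 2 < ρ.re) :
    HasSum (alternatingTerm ρ) (dyadicFactor (2 ^ (-ρ)) * riemannZeta (2 * ρ)) := by
  set z := (2 : ℂ) ^ (-ρ) with hz
  have hz1 : ‖z‖ < 1 := by
    rw [norm_two_cpow_neg]
    exact two_rpow_neg_lt_one (by linarith)
  have hz1' : 1 - z ≠ 0 := sub_ne_zero.mpr fun h => by simp [← h] at hz1
  have hzsq : (2 : ℂ) ^ (-(2 * ρ)) = z ^ 2 := by
    rw [hz, ← cpow_nat_mul, Nat.cast_ofNat, mul_neg]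
  have hval : dyadicFactor z * riemannZeta (2 * ρ) =
      ((1 - z)⁻¹ - 2) * ((1 - (2 : ℂ) ^ (-(2 * ρ))) * riemannZeta (2 * ρ)) := by
    rw [hzsq, dyadicFactor]
    field_simp
    ring
  have hsum : Summable fun x => alternatingTerm ρ (twoPowMulOddSq x) :=
    .of_norm <| by
      simpa only [norm_alternatingTerm_twoPowMulOddSq] using summable_twoPowMulOddSq_rpow_neg hρ
  simp only [alternatingTerm_twoPowMulOddSq] at hsum
  have hre : 1 < (2 * ρ).re := by
    simpa using (by linarith : 1 < 2 * ρ.re)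
  have hpairs : HasSum (fun x => alternatingTerm ρ (twoPowMulOddSq x))
      (dyadicFactor z * riemannZeta (2 * ρ)) := by
    have hmul := (hasSum_neg_one_pow_two_pow_mul hz1).mul (hasSum_odd_cpow_neg hre) hsum
    simp only [alternatingTerm_twoPowMulOddSq, hval]
    exact hmul
  exact (twoPowMulOddSq_injective.hasSum_iff fun n hn => alternatingTerm_eq_zero ρ hn).mp hpairs

lemma norm_sub_sum_alternatingTerm_le {ρ : ℂ} (hρ : 1 / 2 < ρ.re) {N : ℕ} (hN : 0 < N) :
    ‖dyadicFactor (2 ^ (-ρ)) * riemannZeta (2 * ρ) -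
        ∑ n ∈ Finset.Icc 1 N, alternatingTerm ρ n‖ ≤ tailBound ρ.re N := by
  set D := dyadicFactor (2 ^ (-ρ)) * riemannZeta (2 * ρ)
  set tail : ℕ → ℂ := fun n => alternatingTerm ρ n -
    (Finset.Icc 1 N : Set ℕ).indicator (alternatingTerm ρ) n
  have htail : HasSum (tail ∘ twoPowMulOddSq)
      (D - ∑ n ∈ Finset.Icc 1 N, alternatingTerm ρ n) := by
    refine (twoPowMulOddSq_injective.hasSum_iff fun n hn => ?_).mpr
      ((hasSum_alternatingTerm hρ).sub (hasSum_subtype_iff_indicator.mp (Finset.hasSum _ _)))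
    simp [tail, Set.indicator_apply, alternatingTerm_eq_zero ρ hn]
  have hbound (x : ℕ × ℕ) : ‖(tail ∘ twoPowMulOddSq) x‖ ≤
      {x | (N : ℝ) ≤ twoPowMulOddSq x}.indicator
        (fun x => (twoPowMulOddSq x : ℝ) ^ (-ρ.re)) x := by
    rcases le_or_gt (twoPowMulOddSq x) N with hx | hx
    · have hmem : twoPowMulOddSq x ∈ (Finset.Icc 1 N : Set ℕ) :=
        Finset.mem_coe.mpr (Finset.mem_Icc.mpr ⟨twoPowMulOddSq_pos x, hx⟩)
      simp only [tail, Function.comp_apply, Set.indicator_of_mem hmem, sub_self, norm_zero]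
      exact Set.indicator_nonneg (fun _ _ => by positivity) x
    · have hmem : twoPowMulOddSq x ∉ (Finset.Icc 1 N : Set ℕ) := fun h =>
        hx.not_ge (Finset.mem_Icc.mp (Finset.mem_coe.mp h)).2
      rw [Set.indicator_of_mem (by exact_mod_cast hx.le), ← norm_alternatingTerm_twoPowMulOddSq]
      simp only [tail, Function.comp_apply, Set.indicator_of_notMem hmem, sub_zero, le_refl]
  exact (htail.norm_le_of_bounded
    ((summable_twoPowMulOddSq_rpow_neg hρ).indicator _).hasSum hbound).trans
    (tsum_indicator_twoPowMulOddSq_rpow_neg_le hρ (by exact_mod_cast hN))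

lemma norm_dyadicFactor_mul_div_sub_tailBound_le {ρ : ℂ} (hρ : 1 / 2 < ρ.re) {N : ℕ}
    (hN : 0 < N) :
    ‖dyadicFactor (2 ^ (-ρ))‖ *
          ((riemannZeta (4 * ρ.re : ℝ)).re / (riemannZeta (2 * ρ.re : ℝ)).re) -
        tailBound ρ.re N ≤
      ‖∑ n ∈ Finset.Icc 1 N, alternatingTerm ρ n‖ := by
  have hre : (2 * ρ).re = 2 * ρ.re := by simp
  have hzeta : (riemannZeta (4 * ρ.re : ℝ)).re / (riemannZeta (2 * ρ.re : ℝ)).re ≤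
      ‖riemannZeta (2 * ρ)‖ := by
    have h := re_riemannZeta_div_le (s := 2 * ρ) (by rw [hre]; linarith)
    rwa [hre, show 2 * (2 * ρ.re) = 4 * ρ.re by ring] at h
  have hprod := mul_le_mul_of_nonneg_left hzeta (norm_nonneg (dyadicFactor (2 ^ (-ρ))))
  rw [← norm_mul] at hprod
  linarith [norm_sub_sum_alternatingTerm_le hρ hN, norm_le_norm_add_norm_sub'
    (dyadicFactor (2 ^ (-ρ)) * riemannZeta (2 * ρ)) (∑ n ∈ Finset.Icc 1 N, alternatingTerm ρ n)]

lemma two_cpow_neg_re (ρ : ℂ) :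
    ((2 : ℂ) ^ (-ρ)).re = ‖(2 : ℂ) ^ (-ρ)‖ * Real.cos (ρ.im * Real.log 2) := by
  have hlog : log 2 = (Real.log 2 : ℝ) := by simp
  have him : (log 2 * -ρ).im = -(ρ.im * Real.log 2) := by
    rw [hlog, im_ofReal_mul, neg_im]
    ring
  rw [cpow_def_of_ne_zero two_ne_zero, exp_re, norm_exp, him, Real.cos_neg]

lemma one_sub_norm_le_norm_dyadicFactor {z : ℂ} (hre : z.re ≤ 0) :
    1 - ‖z‖ ≤ ‖dyadicFactor z‖ := by
  have hleft : 1 ≤ ‖2 * z - 1‖ := by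
    refine le_trans ?_ ((neg_le_abs _).trans (abs_re_le_norm _))
    simp only [sub_re, mul_re, re_ofNat, im_ofNat, one_re]
    linarith
  have hright : 1 - ‖z‖ ≤ ‖1 + z‖ := by simpa using norm_sub_le_norm_add 1 z
  rw [dyadicFactor, norm_mul]
  exact hright.trans (le_mul_of_one_le_left (norm_nonneg _) hleft)

lemma one_sub_sq_mul_le_sq_norm_dyadicFactor {z : ℂ} {c : ℝ} (hc0 : 0 ≤ c) (hc1 : c ≤ 1)
    (hz : z.re = ‖z‖ * c) :
    (1 - c ^ 2) * (1 + 3 / 4 * c ^ 2) ≤ ‖dyadicFactor z‖ ^ 2 := by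
  set r := ‖z‖
  have hr : 0 ≤ r := norm_nonneg z
  have hc : 0 ≤ 1 - c ^ 2 := by nlinarith
  have hsq : z.re ^ 2 + z.im ^ 2 = r ^ 2 := by rw [Complex.sq_norm, normSq_apply]; ring
  have hleft : ‖2 * z - 1‖ ^ 2 = 1 - c ^ 2 + (2 * r - c) ^ 2 := by
    rw [Complex.sq_norm, normSq_apply]
    simp only [sub_re, sub_im, mul_re, mul_im, re_ofNat, im_ofNat, one_re, one_im]
    linear_combination 4 * hsq - 4 * hz
  have hright : ‖1 + z‖ ^ 2 = 1 + 2 * r * c + r ^ 2 := by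
    rw [Complex.sq_norm, normSq_apply]
    simp only [add_re, add_im, one_re, one_im]
    linear_combination hsq + 2 * hz
  rw [dyadicFactor, norm_mul, mul_pow, hleft, hright]
  set u := 2 * r - c with hu
  calc (1 - c ^ 2) * (1 + 3 / 4 * c ^ 2)
      ≤ (1 - c ^ 2) * (1 + c ^ 2 - c ^ 2 * (1 - c ^ 2) / 4) := by nlinarith [sq_nonneg (c ^ 2)]
    _ ≤ 1 - c ^ 4 + u * (c * (1 - c ^ 2)) + u ^ 2 := by
        nlinarith [sq_nonneg (u + c * (1 - c ^ 2) / 2)]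
    _ ≤ (1 - c ^ 2 + u ^ 2) * (1 + 2 * r * c) := by
        have : 0 ≤ u ^ 2 * (r * c) := mul_nonneg (sq_nonneg u) (mul_nonneg hr hc0)
        linear_combination 2 * this + (c - c ^ 3) * hu
    _ ≤ (1 - c ^ 2 + u ^ 2) * (1 + 2 * r * c + r ^ 2) :=
        mul_le_mul_of_nonneg_left (le_add_of_nonneg_right (sq_nonneg r)) (by positivity)

lemma cos_le_of_pi_div_hundred_le_abs {δ : ℝ} (hδ : Real.pi / 100 ≤ |δ|) (hδ' : |δ| ≤ Real.pi) :
    Real.cos δ ≤ 0.99951 := by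
  have hpi : 0.0314 ≤ |δ| := by linarith [Real.pi_gt_d2]
  have hbound := (abs_le.mp (Real.cos_bound (x := 0.0314) (by norm_num [abs_of_pos]))).2
  calc Real.cos δ = Real.cos |δ| := (Real.cos_abs δ).symm
    _ ≤ Real.cos 0.0314 := Real.cos_le_cos_of_nonneg_of_le_pi (by norm_num) hδ' hpi
    _ ≤ 0.99951 := by
        rw [abs_of_pos (by norm_num)] at hbound
        norm_num at hbound ⊢
        linarith

lemma le_norm_dyadicFactor {z : ℂ} {c : ℝ} (hc : c ≤ 0.99951)
    (hz : ‖z‖ ≤ 3 / 4) (hre : z.re = ‖z‖ * c) : 0.041 ≤ ‖dyadicFactor z‖ := by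
  rcases le_total c 0 with hc0 | hc0
  · have := one_sub_norm_le_norm_dyadicFactor
      (hre.trans_le (mul_nonpos_of_nonneg_of_nonpos (norm_nonneg z) hc0))
    linarith
  · refine le_of_pow_le_pow_left₀ two_ne_zero (norm_nonneg _) ?_
    calc (0.041 : ℝ) ^ 2 ≤ (1 - c ^ 2) * (1 + 3 / 4 * c ^ 2) := by
          have hcsq : c ^ 2 ≤ 0.99951 ^ 2 := by gcongr
          nlinarith
      _ ≤ _ := one_sub_sq_mul_le_sq_norm_dyadicFactor hc0 (by linarith) hre

lemma two_rpow_neg_one_half_le : (2 : ℝ) ^ (-(1 / 2) : ℝ) ≤ 3 / 4 := by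
  rw [Real.rpow_neg zero_le_two, ← Real.sqrt_eq_rpow]
  refine inv_le_of_inv_le₀ (by norm_num) (Real.le_sqrt_of_sq_le ?_)
  norm_num

lemma three_sevenths_le_re_riemannZeta_div {σ : ℝ} (hσ : 7 / 8 ≤ σ) :
    3 / 7 ≤ (riemannZeta (4 * σ : ℝ)).re / (riemannZeta (2 * σ : ℝ)).re := by
  have h2 : 1 < 2 * σ := by linarith
  have hden : (riemannZeta (2 * σ : ℝ)).re ≤ 7 / 3 := by
    rw [← norm_riemannZeta_ofReal h2]
    refine (norm_riemannZeta_le (by rwa [ofReal_re])).trans ?_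
    rw [ofReal_re, div_le_div_iff₀ (by linarith) (by norm_num)]
    linarith
  have hnum : 1 ≤ (riemannZeta (4 * σ : ℝ)).re := one_le_re_riemannZeta (by linarith)
  rw [le_div_iff₀ (riemannZeta_re_pos_of_one_lt h2)]
  linarith

lemma rpow_half_sub_le {σ : ℝ} (hσ : 7 / 8 ≤ σ) {x : ℝ} (hx : 10 ^ 12 ≤ x) :
    x ^ (1 / 2 - σ) ≤ 1 / 30000 := by
  have hbase : (30000 : ℝ) ≤ (10 ^ 12) ^ (3 / 8 : ℝ) := by
    refine le_of_pow_le_pow_left₀ (n := 8) (by norm_num) (by positivity) ?_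
    rw [← Real.rpow_mul_natCast (by positivity)]
    norm_num
  calc x ^ (1 / 2 - σ) ≤ x ^ (-(3 / 8) : ℝ) :=
        Real.rpow_le_rpow_of_exponent_le (by linarith) (by linarith)
    _ ≤ (10 ^ 12) ^ (-(3 / 8) : ℝ) :=
        Real.rpow_le_rpow_of_nonpos (by norm_num) hx (by norm_num)
    _ ≤ 1 / 30000 := by
        rw [Real.rpow_neg (by positivity), ← one_div]
        gcongr

lemma tailBound_le {σ : ℝ} (hσ : 7 / 8 ≤ σ) {x : ℝ} (hx : 10 ^ 12 ≤ x) :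
    tailBound σ x ≤ 7 / 3 * (1 / 30000) * 4 := by
  have : 0 < x := lt_of_lt_of_le (by norm_num) hx
  have hq := two_rpow_neg_one_half_le
  have hcoeff : 2 * σ / (2 * σ - 1) ≤ 7 / 3 := by
    rw [div_le_div_iff₀ (by linarith) (by norm_num)]
    linarith
  have hgeom : (1 - (2 : ℝ) ^ (-(1 / 2) : ℝ))⁻¹ ≤ 4 :=
    inv_le_of_inv_le₀ (by norm_num) (by linarith)
  rw [tailBound]
  gcongr
  · exact inv_nonneg.mpr (by linarith)
  · exact rpow_half_sub_le hσ hx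

theorem stmt7_general {ρ : ℂ} (hρ : 7 / 8 ≤ ρ.re) {δ : ℝ} (hδ : Real.pi / 100 ≤ |δ|)
    (hδ' : |δ| ≤ Real.pi) (hn : ∃ n : ℤ, ρ.im * Real.log 2 = 2 * Real.pi * n + δ)
    {N : ℕ} (hN : 10 ^ 12 ≤ N) :
    1 / 25 * (riemannZeta ((4 * ρ.re : ℝ) : ℂ)).re / (riemannZeta ((2 * ρ.re : ℝ) : ℂ)).re ≤
      ‖∑ n ∈ Finset.Icc 1 N,
          ((-1 : ℂ) ^ n * ((∑ d ∈ n.divisors, lambdaOdd d : ℤ) : ℂ)) / (n : ℂ) ^ ρ‖ := by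
  obtain ⟨n, hn⟩ := hn
  have hcos : Real.cos (ρ.im * Real.log 2) = Real.cos δ := by
    rw [hn, add_comm, mul_comm, Real.cos_add_int_mul_two_pi]
  have hnorm : ‖(2 : ℂ) ^ (-ρ)‖ ≤ 3 / 4 := by
    rw [norm_two_cpow_neg]
    exact (Real.rpow_le_rpow_of_exponent_le one_le_two (by linarith)).trans
      two_rpow_neg_one_half_le
  have hfactor : 0.041 ≤ ‖dyadicFactor (2 ^ (-ρ))‖ :=
    le_norm_dyadicFactor (cos_le_of_pi_div_hundred_le_abs hδ hδ') hnorm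
      (hcos ▸ two_cpow_neg_re ρ)
  have hmain := norm_dyadicFactor_mul_div_sub_tailBound_le
    (by linarith : 1 / 2 < ρ.re) (by lia : 0 < N)
  have htail := tailBound_le hρ (by exact_mod_cast hN : (10 : ℝ) ^ 12 ≤ N)
  have hquot := three_sevenths_le_re_riemannZeta_div hρ
  have hprod := mul_le_mul_of_nonneg_right hfactor (by linarith : 0 ≤
    (riemannZeta (4 * ρ.re : ℝ)).re / (riemannZeta (2 * ρ.re : ℝ)).re)
  rw [mul_div_assoc]
  -- The slack `(0.041 - 1 / 25) * (3 / 7)` exceeds the bound for the tail.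
  exact le_trans (by linarith) hmain

/-- Lemma 1: for `ρ = β + iγ` with `7/8 < β ≤ 1` and `γ log 2` staying away from
multiples of `2π`, and any `U ≥ 10`,
`(1/25) ζ(4β)/ζ(2β) - U^{6-12β} ≤ |Σ_{n ≤ U^{12}} (-1)^n (1*λ_odd)(n) / n^ρ|`. -/
theorem stmt7 (β γ : ℝ) (ρ : ℂ) (hρ : ρ = β + γ * I)
    (hβ : 7 / 8 < β) (hβ1 : β ≤ 1)
    (δ : ℝ) (hδ1 : -Real.pi < δ) (hδ2 : δ ≤ Real.pi)
    (hδ3 : ∃ n : ℤ, γ * Real.log 2 = 2 * Real.pi * n + δ)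
    (hδ4 : Real.pi / 100 < |δ|)
    (U : ℝ) (hU : 10 ≤ U) :
    1 / 25 * (riemannZeta ((4 * β : ℝ) : ℂ)).re / (riemannZeta ((2 * β : ℝ) : ℂ)).re -
        U ^ (6 - 12 * β) ≤
      ‖∑ n ∈ Finset.Icc 1 ⌊U ^ (12 : ℕ)⌋₊,
          ((-1 : ℂ) ^ n * ((∑ d ∈ n.divisors, lambdaOdd d : ℤ) : ℂ)) / (n : ℂ) ^ ρ‖ := by
  subst hρ
  have hN : 10 ^ 12 ≤ ⌊U ^ (12 : ℕ)⌋₊ := by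
    refine Nat.le_floor ?_
    rw [Nat.cast_pow, Nat.cast_ofNat]
    gcongr
  have hmain := stmt7_general (ρ := β + γ * I) (by simpa using hβ.le) hδ4.le
    (abs_le.mpr ⟨hδ1.le, hδ2⟩) (by simpa using hδ3) hN
  simp only [add_re, ofReal_re, re_ofReal_mul, I_re, mul_zero, add_zero] at hmain
  exact (sub_le_self _ (by positivity)).trans hmain
end

section
/- Let χ be a nonprincipal Dirichlet character modulo D. Then for every complex s with σ = Re(s) > 0 and all reals 1 ≤ z < w, | Σ_{z < d ≤ w} χ(d)/d^s | ≤ (2 + 2|s|/σ) · √D · log D / z^σ. -/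
/-!
By partial summation it suffices to bound the sums of `χ` over intervals by `2 √D log D`. Let `ψ`
modulo `q` be the primitive character inducing `χ`. The Gauss sum `τ` of `ψ⁻¹` expresses `ψ(n) τ` as
a combination of the `q`-th roots of unity `e(kn/q)`, so that each interval sum of `ψ` is bounded by
`|τ|⁻¹ = q ^ (-1/2)` times a sum over `k ≠ 0` of bounds `2 / |e(k/q) - 1|` for geometric sums, and
Jordan's inequality turns the latter into a harmonic sum of size at most `q log q`. Möbius inversion
over the divisors of `D / q`, of which there are at most `2 √(D / q)`, passes from `ψ` to `χ`.
-/

open Finset MeasureTheory DirichletCharacter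
open scoped ArithmeticFunction.Moebius ZMod

theorem harmonic_le_log_two_mul_add_one (n : ℕ) : (harmonic n : ℝ) ≤ Real.log (2 * n + 1) := by
  induction n with
  | zero => simp
  | succ n ih =>
    have inv_le_log : ((n : ℝ) + 1)⁻¹ ≤ Real.log (1 + 2 / (2 * n + 1)) := by
      convert Real.le_log_one_add_of_nonneg (x := 2 / (2 * (n : ℝ) + 1)) (by positivity) using 1
      field_simp
      ring
    have log_succ : Real.log (2 * (n + 1 : ℕ) + 1) =
        Real.log (2 * n + 1) + Real.log (1 + 2 / (2 * n + 1)) := by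
      rw [← Real.log_mul (by positivity) (by positivity)]
      congr 1
      push_cast
      field_simp
      ring
    rw [harmonic_succ, log_succ]
    push_cast
    exact add_le_add ih inv_le_log

theorem harmonic_half_add_harmonic_half_le {q : ℕ} (hq : q ≠ 0) :
    (harmonic (q / 2) : ℝ) + harmonic ((q - 1) / 2) ≤ 2 * Real.log q := by
  have mul_le_sq : (2 * (q / 2) + 1) * (2 * ((q - 1) / 2) + 1) ≤ q ^ 2 := by
    obtain ⟨c, rfl | rfl⟩ := Nat.even_or_odd' q
    · rw [show 2 * c / 2 = c by omega, show 2 * ((2 * c - 1) / 2) + 1 = 2 * c - 1 by omega]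
      exact (Nat.sq_sub_sq (2 * c) 1).symm.le.trans (Nat.sub_le _ _)
    · rw [show (2 * c + 1) / 2 = c by omega, show (2 * c + 1 - 1) / 2 = c by omega, sq]
  calc (harmonic (q / 2) : ℝ) + harmonic ((q - 1) / 2)
      ≤ Real.log (2 * (q / 2 : ℕ) + 1) + Real.log (2 * ((q - 1) / 2 : ℕ) + 1) :=
        add_le_add (harmonic_le_log_two_mul_add_one _) (harmonic_le_log_two_mul_add_one _)
    _ = Real.log ((2 * (q / 2 : ℕ) + 1) * (2 * ((q - 1) / 2 : ℕ) + 1)) :=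
        (Real.log_mul (by positivity) (by positivity)).symm
    _ ≤ Real.log ((q : ℝ) ^ 2) := Real.log_le_log (by positivity) (mod_cast mul_le_sq)
    _ = 2 * Real.log q := by rw [Real.log_pow, Nat.cast_ofNat]

theorem sum_zmod_eq_sum_range {M : Type*} [AddCommMonoid M] (q : ℕ) [NeZero q] (f : ZMod q → M) :
    ∑ k : ZMod q, f k = ∑ a ∈ range q, f a :=
  sum_nbij' ZMod.val (↑) (fun k _ ↦ mem_range.2 k.val_lt) (fun _ _ ↦ mem_univ _)
    (fun k _ ↦ ZMod.natCast_zmod_val k) (fun _ ha ↦ ZMod.val_cast_of_lt (mem_range.1 ha))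
    (fun k _ ↦ by rw [ZMod.natCast_zmod_val])

-- The residue `k = 0` contributes `0⁻¹ = 0`.
theorem sum_inv_abs_valMinAbs (q : ℕ) [NeZero q] :
    ∑ k : ZMod q, |(k.valMinAbs : ℝ)|⁻¹ = harmonic (q / 2) + harmonic ((q - 1) / 2) := by
  have hq : 0 < q := NeZero.pos q
  have lower_half : ∑ a ∈ range (q / 2 + 1), |((a : ZMod q).valMinAbs : ℝ)|⁻¹ =
      harmonic (q / 2) := by
    rw [sum_range_succ', Nat.cast_zero, ZMod.valMinAbs_zero, Int.cast_zero, abs_zero, inv_zero,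
      add_zero, harmonic, Rat.cast_sum]
    refine sum_congr rfl fun a ha ↦ ?_
    rw [ZMod.valMinAbs_natCast_of_le_half (mem_range.1 ha)]
    simp [abs_of_nonneg (by positivity : (0 : ℝ) ≤ a + 1)]
  have upper_half : ∑ a ∈ Ico (q / 2 + 1) q, |((a : ZMod q).valMinAbs : ℝ)|⁻¹ =
      harmonic ((q - 1) / 2) := by
    calc ∑ a ∈ Ico (q / 2 + 1) q, |((a : ZMod q).valMinAbs : ℝ)|⁻¹
        = ∑ a ∈ Ico (q / 2 + 1) q, ((q - a : ℕ) : ℝ)⁻¹ := by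
          refine sum_congr rfl fun a ha ↦ ?_
          obtain ⟨h_half, h_lt⟩ := mem_Ico.1 ha
          rw [ZMod.valMinAbs_natCast_of_half_lt h_half h_lt, ← Int.cast_abs, abs_sub_comm,
            ← Nat.cast_sub h_lt.le, Nat.abs_cast, Int.cast_natCast]
      _ = ∑ j ∈ Icc 1 ((q - 1) / 2), (j : ℝ)⁻¹ := by
          rw [sum_Ico_reflect (fun j ↦ (j : ℝ)⁻¹) _ q.le_succ]
          congr 1
          ext j
          simp only [mem_Ico, mem_Icc]
          omega
      _ = harmonic ((q - 1) / 2) := by simp [harmonic_eq_sum_Icc]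
  rw [sum_zmod_eq_sum_range, ← sum_range_add_sum_Ico _ (by omega : q / 2 + 1 ≤ q), lower_half,
    upper_half]

theorem four_mul_abs_valMinAbs_div_le_norm_stdAddChar_sub_one {q : ℕ} [NeZero q] (k : ZMod q) :
    4 * |(k.valMinAbs : ℝ)| / q ≤ ‖ZMod.stdAddChar k - 1‖ := by
  have hq : (0 : ℝ) < q := mod_cast NeZero.pos q
  set θ : ℝ := Real.pi * k.valMinAbs / q
  have abs_θ : |θ| = Real.pi * |(k.valMinAbs : ℝ)| / q := by
    rw [abs_div, abs_mul, abs_of_pos Real.pi_pos, abs_of_pos hq]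
  have two_mul_abs_le : 2 * |(k.valMinAbs : ℝ)| ≤ q := by
    obtain ⟨h_neg, h_pos⟩ := k.valMinAbs_mem_Ioc
    have abs_le : |k.valMinAbs * 2| ≤ q := abs_le.2 ⟨h_neg.le, h_pos⟩
    rw [abs_mul, abs_two, mul_comm] at abs_le
    exact mod_cast abs_le
  have abs_θ_le : |θ| ≤ Real.pi / 2 := by
    rw [abs_θ, div_le_div_iff₀ hq two_pos]
    nlinarith [Real.pi_pos]
  have stdAddChar_eq : ZMod.stdAddChar k = Complex.exp (Complex.I * (2 * θ : ℝ)) := by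
    rw [← congrArg ZMod.stdAddChar k.coe_valMinAbs, ZMod.stdAddChar_coe]
    congr 1
    simp only [θ]
    push_cast
    ring
  calc 4 * |(k.valMinAbs : ℝ)| / q = 2 * (2 / Real.pi * |θ|) := by
        rw [abs_θ]
        field_simp
        ring
    _ ≤ 2 * |Real.sin θ| := by gcongr; exact Real.mul_abs_le_abs_sin abs_θ_le
    _ = ‖ZMod.stdAddChar k - 1‖ := by
        rw [stdAddChar_eq, Complex.norm_exp_I_mul_ofReal_sub_one,
          mul_div_cancel_left₀ _ two_ne_zero, norm_mul, Real.norm_ofNat, Real.norm_eq_abs]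

theorem sum_inv_norm_stdAddChar_sub_one_le (q : ℕ) [NeZero q] :
    ∑ k : ZMod q, ‖ZMod.stdAddChar k - 1‖⁻¹ ≤ q / 2 * Real.log q := by
  have inv_le (k : ZMod q) :
      ‖ZMod.stdAddChar k - 1‖⁻¹ ≤ q / 4 * |(k.valMinAbs : ℝ)|⁻¹ := by
    rcases eq_or_ne k 0 with rfl | hk
    · simp
    have hq : (0 : ℝ) < q := mod_cast NeZero.pos q
    have abs_pos : 0 < |(k.valMinAbs : ℝ)| := by simpa [ZMod.valMinAbs_eq_zero] using hk
    calc ‖ZMod.stdAddChar k - 1‖⁻¹ ≤ (4 * |(k.valMinAbs : ℝ)| / q)⁻¹ :=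
          inv_anti₀ (by positivity) (four_mul_abs_valMinAbs_div_le_norm_stdAddChar_sub_one k)
      _ = q / 4 * |(k.valMinAbs : ℝ)|⁻¹ := by field_simp
  calc ∑ k : ZMod q, ‖ZMod.stdAddChar k - 1‖⁻¹
      ≤ ∑ k : ZMod q, q / 4 * |(k.valMinAbs : ℝ)|⁻¹ := sum_le_sum fun k _ ↦ inv_le k
    _ = q / 4 * (harmonic (q / 2) + harmonic ((q - 1) / 2)) := by
        rw [← mul_sum, sum_inv_abs_valMinAbs]
    _ ≤ q / 4 * (2 * Real.log q) := by
        gcongr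
        exact harmonic_half_add_harmonic_half_le (NeZero.ne q)
    _ = q / 2 * Real.log q := by ring

theorem norm_sum_Ioc_pow_le {K : Type*} [NormedDivisionRing K] {ζ : K} (hζ : ‖ζ‖ ≤ 1)
    (hζ_ne : ζ ≠ 1) (a b : ℕ) : ‖∑ n ∈ Ioc a b, ζ ^ n‖ ≤ 2 * ‖ζ - 1‖⁻¹ := by
  rcases le_total b a with hba | hab
  · rw [Ioc_eq_empty_of_le hba, sum_empty, norm_zero]
    positivity
  rw [← Ico_add_one_add_one_eq_Ioc, geom_sum_Ico hζ_ne (by omega), norm_div, div_eq_mul_inv]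
  gcongr
  calc ‖ζ ^ (b + 1) - ζ ^ (a + 1)‖ ≤ ‖ζ‖ ^ (b + 1) + ‖ζ‖ ^ (a + 1) := by
        simpa only [norm_pow] using norm_sub_le (ζ ^ (b + 1)) (ζ ^ (a + 1))
    _ ≤ 1 + 1 := add_le_add (pow_le_one₀ (norm_nonneg _) hζ) (pow_le_one₀ (norm_nonneg _) hζ)
    _ = 2 := one_add_one_eq_two

theorem norm_sum_Ioc_stdAddChar_mul_le {q : ℕ} [NeZero q] {k : ZMod q} (hk : k ≠ 0) (a b : ℕ) :
    ‖∑ n ∈ Ioc a b, ZMod.stdAddChar (k * (n : ZMod q))‖ ≤ 2 * ‖ZMod.stdAddChar k - 1‖⁻¹ := by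
  have stdAddChar_ne_one : ZMod.stdAddChar k ≠ 1 := fun h ↦
    hk (ZMod.injective_stdAddChar (h.trans (AddChar.map_zero_eq_one _).symm))
  simp_rw [mul_comm k, ← nsmul_eq_mul, AddChar.map_nsmul_eq_pow]
  exact norm_sum_Ioc_pow_le (AddChar.norm_apply _ _).le stdAddChar_ne_one a b

theorem isPrimitive_inv {R : Type*} [CommMonoidWithZero R] {n : ℕ} {χ : DirichletCharacter R n}
    (hχ : χ.IsPrimitive) : χ⁻¹.IsPrimitive := by
  rwa [isPrimitive_def, conductor_inv]

section PrimitiveCharacter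

variable {q : ℕ} [NeZero q] {χ : DirichletCharacter ℂ q}

-- Evaluate the Fourier inversion formula for `χ` at `-1`.
theorem norm_gaussSum_stdAddChar_of_isPrimitive (hχ : χ.IsPrimitive) :
    ‖gaussSum χ ZMod.stdAddChar‖ = √q := by
  have dft_eq : 𝓕 (χ : ZMod q → ℂ) = fun k ↦ χ⁻¹ (-k) * gaussSum χ ZMod.stdAddChar :=
    funext hχ.fourierTransform_eq_inv_mul_gaussSum
  have gaussSum_mul_star : gaussSum χ ZMod.stdAddChar * star (gaussSum χ ZMod.stdAddChar) = q :=
    calc gaussSum χ ZMod.stdAddChar * star (gaussSum χ ZMod.stdAddChar)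
        = 𝓕 (fun k ↦ χ⁻¹ (-k) * gaussSum χ ZMod.stdAddChar) (-1) := by
          rw [star_gaussSum_eq, gaussSum.eq_def χ⁻¹, mul_sum, ZMod.dft_apply]
          refine Fintype.sum_equiv (Equiv.neg _) _ _ fun j ↦ ?_
          simp only [Equiv.neg_apply, AddChar.inv_apply, mul_neg, mul_one, neg_neg, smul_eq_mul]
          ring
      _ = q := by
          rw [← dft_eq, ZMod.dft_dft]
          simp
  have norm_mul_self : ‖gaussSum χ ZMod.stdAddChar‖ * ‖gaussSum χ ZMod.stdAddChar‖ = q := by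
    simpa only [norm_mul, norm_star, Complex.norm_natCast] using congrArg norm gaussSum_mul_star
  rw [← norm_mul_self, Real.sqrt_mul_self (norm_nonneg _)]

theorem apply_mul_gaussSum_inv_of_isPrimitive (hχ : χ.IsPrimitive) (x : ZMod q) :
    χ x * gaussSum χ⁻¹ ZMod.stdAddChar = ∑ k : ZMod q, χ⁻¹ k * ZMod.stdAddChar (k * x) := by
  have h := gaussSum_mulShift_of_isPrimitive ZMod.stdAddChar (isPrimitive_inv hχ) x
  rw [inv_inv] at h
  simp_rw [← h, gaussSum, AddChar.mulShift_apply, mul_comm x]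

theorem norm_sum_Ioc_le_of_isPrimitive (hχ : χ.IsPrimitive) (hq : q ≠ 1) (a b : ℕ) :
    ‖∑ n ∈ Ioc a b, χ n‖ ≤ √q * Real.log q := by
  have sqrt_pos : 0 < √(q : ℝ) := Real.sqrt_pos.2 (mod_cast NeZero.pos q)
  have term_le (k : ZMod q) : ‖χ⁻¹ k * ∑ n ∈ Ioc a b, ZMod.stdAddChar (k * (n : ZMod q))‖ ≤
      2 * ‖ZMod.stdAddChar k - 1‖⁻¹ := by
    rcases eq_or_ne k 0 with rfl | hk
    · rw [map_zero' _ hq, zero_mul, norm_zero]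
      positivity
    · rw [norm_mul]
      exact (mul_le_of_le_one_left (norm_nonneg _) (norm_le_one _ k)).trans
        (norm_sum_Ioc_stdAddChar_mul_le hk a b)
  refine le_of_mul_le_mul_right ?_ sqrt_pos
  calc ‖∑ n ∈ Ioc a b, χ n‖ * √q
      = ‖∑ k : ZMod q, χ⁻¹ k * ∑ n ∈ Ioc a b, ZMod.stdAddChar (k * (n : ZMod q))‖ := by
        rw [← norm_gaussSum_stdAddChar_of_isPrimitive (isPrimitive_inv hχ), ← norm_mul, sum_mul]
        simp_rw [apply_mul_gaussSum_inv_of_isPrimitive hχ, mul_sum]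
        rw [sum_comm]
    _ ≤ ∑ k : ZMod q, 2 * ‖ZMod.stdAddChar k - 1‖⁻¹ := norm_sum_le_of_le _ fun k _ ↦ term_le k
    _ ≤ 2 * (q / 2 * Real.log q) := by
        rw [← mul_sum]
        gcongr
        exact sum_inv_norm_stdAddChar_sub_one_le q
    _ = √q * Real.log q * √q := by
        rw [mul_right_comm, Real.mul_self_sqrt q.cast_nonneg]
        ring

end PrimitiveCharacter

theorem card_divisors_le_two_mul_sqrt (n : ℕ) : #n.divisors ≤ 2 * n.sqrt := by
  have divisors_subset : n.divisors ⊆ Ioc 0 n.sqrt ∪ (Ioc 0 n.sqrt).image (n / ·) := by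
    intro d hd
    obtain ⟨h_dvd, hn⟩ := Nat.mem_divisors.1 hd
    have d_pos : 0 < d := Nat.pos_of_mem_divisors hd
    rw [mem_union, mem_image]
    rcases le_or_gt d n.sqrt with h_le | h_lt
    · exact .inl (mem_Ioc.2 ⟨d_pos, h_le⟩)
    · refine .inr ⟨n / d, mem_Ioc.2 ⟨Nat.div_pos (Nat.divisor_le hd) d_pos, ?_⟩,
        Nat.div_div_self h_dvd hn⟩
      rw [← Nat.lt_succ_iff, Nat.div_lt_iff_lt_mul d_pos]
      exact n.lt_succ_sqrt.trans_le (Nat.mul_le_mul_left _ h_lt)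
  calc #n.divisors ≤ #(Ioc 0 n.sqrt) + #((Ioc 0 n.sqrt).image (n / ·)) :=
        (card_le_card divisors_subset).trans (card_union_le _ _)
    _ ≤ #(Ioc 0 n.sqrt) + #(Ioc 0 n.sqrt) := Nat.add_le_add_left card_image_le _
    _ = 2 * n.sqrt := by rw [Nat.card_Ioc, tsub_zero, two_mul]

theorem sum_divisors_filter_dvd_moebius {R : Type*} [Ring R] {k : ℕ} (hk : k ≠ 0) (n : ℕ) :
    ∑ d ∈ k.divisors with d ∣ n, (μ d : R) = if n.Coprime k then 1 else 0 := by
  have filter_eq : {d ∈ k.divisors | d ∣ n} = (n.gcd k).divisors := by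
    ext d
    simp [Nat.dvd_gcd_iff, hk, and_comm]
  have h := DFunLike.congr_fun ArithmeticFunction.moebius_mul_coe_zeta (n.gcd k)
  rw [ArithmeticFunction.coe_mul_zeta_apply, ArithmeticFunction.one_apply] at h
  rw [filter_eq, ← Int.cast_sum, h]
  simp [Nat.Coprime]

theorem sum_Ioc_filter_dvd {M : Type*} [AddCommMonoid M] (f : ℕ → M) {d : ℕ} (hd : 0 < d)
    (a b : ℕ) : ∑ n ∈ Ioc a b with d ∣ n, f n = ∑ m ∈ Ioc (a / d) (b / d), f (d * m) := by
  have mem_iff (m : ℕ) : m ∈ Ioc (a / d) (b / d) ↔ d * m ∈ Ioc a b := by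
    rw [mem_Ioc, mem_Ioc, Nat.div_lt_iff_lt_mul hd, Nat.le_div_iff_mul_le hd, mul_comm m]
  symm
  refine sum_nbij (d * ·) (fun m hm ↦ mem_filter.2 ⟨(mem_iff m).1 hm, dvd_mul_right d m⟩)
    (mul_right_injective₀ hd.ne').injOn ?_ fun _ _ ↦ rfl
  intro n hn
  obtain ⟨h_mem, m, rfl⟩ := mem_filter.1 hn
  exact ⟨m, (mem_iff m).2 h_mem, rfl⟩

theorem changeLevel_natCast {R : Type*} [CommMonoidWithZero R] [Nontrivial R]
    {q D : ℕ} (h : q ∣ D) (ψ : DirichletCharacter R q) (n : ℕ) :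
    changeLevel h ψ n = if n.Coprime (D / q) then ψ n else 0 := by
  have isCoprime_iff (m : ℕ) : IsCoprime (n : ℤ) m ↔ n.Coprime m := Nat.isCoprime_iff_coprime
  have coprime_iff : n.Coprime D ↔ n.Coprime q ∧ n.Coprime (D / q) := by
    rw [← Nat.coprime_mul_iff_right, Nat.mul_div_cancel' h]
  by_cases h_coprime : n.Coprime D
  · rw [if_pos (coprime_iff.1 h_coprime).2]
    simpa using changeLevel_eq_cast_of_dvd' ψ h ((isCoprime_iff D).2 h_coprime)
  · have apply_eq_zero : changeLevel h ψ n = 0 := by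
      simpa [isCoprime_iff, h_coprime] using apply_eq_zero_iff (changeLevel h ψ) n
    rw [apply_eq_zero, eq_comm, ite_eq_right_iff]
    intro h_coprime_div
    have not_coprime : ¬ n.Coprime q := fun hq ↦ h_coprime (coprime_iff.2 ⟨hq, h_coprime_div⟩)
    simpa [isCoprime_iff, not_coprime] using apply_eq_zero_iff ψ n

section ChangeLevel

variable {q D : ℕ} [NeZero D]

theorem sum_Ioc_changeLevel {R : Type*} [CommRing R] [Nontrivial R] (h : q ∣ D)
    (ψ : DirichletCharacter R q) (a b : ℕ) :
    ∑ n ∈ Ioc a b, changeLevel h ψ n =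
      ∑ d ∈ (D / q).divisors, μ d * ψ d * ∑ m ∈ Ioc (a / d) (b / d), ψ m := by
  have div_ne_zero : D / q ≠ 0 := (Nat.div_pos (Nat.le_of_dvd (NeZero.pos D) h)
    (Nat.pos_of_dvd_of_pos h (NeZero.pos D))).ne'
  have changeLevel_eq (n : ℕ) :
      changeLevel h ψ n = ∑ d ∈ (D / q).divisors, if d ∣ n then (μ d : R) * ψ n else 0 := by
    rw [changeLevel_natCast, ← sum_filter, ← sum_mul, sum_divisors_filter_dvd_moebius div_ne_zero,
      ite_mul, one_mul, zero_mul]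
  simp_rw [changeLevel_eq]
  rw [sum_comm]
  refine sum_congr rfl fun d hd ↦ ?_
  rw [← sum_filter, sum_Ioc_filter_dvd _ (Nat.pos_of_mem_divisors hd), mul_sum]
  simp only [Nat.cast_mul, map_mul, mul_assoc]

theorem norm_sum_Ioc_changeLevel_le {F : Type*} [NormedField F] (h : q ∣ D)
    (ψ : DirichletCharacter F q) {B : ℝ} (hB : ∀ a b : ℕ, ‖∑ n ∈ Ioc a b, ψ n‖ ≤ B) (a b : ℕ) :
    ‖∑ n ∈ Ioc a b, changeLevel h ψ n‖ ≤ #(D / q).divisors * B := by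
  have norm_moebius_le_one (d : ℕ) : ‖(μ d : F)‖ ≤ 1 := by
    rcases ArithmeticFunction.moebius_eq_or d with h | h | h <;> simp [h]
  rw [sum_Ioc_changeLevel, ← nsmul_eq_mul, ← sum_const]
  refine norm_sum_le_of_le _ fun d _ ↦ ?_
  rw [norm_mul, norm_mul]
  exact (mul_le_of_le_one_left (norm_nonneg _)
    (mul_le_one₀ (norm_moebius_le_one d) (norm_nonneg _) (norm_le_one ψ d))).trans (hB _ _)

end ChangeLevel

theorem norm_sum_Ioc_le_of_ne_one {D : ℕ} [NeZero D] {χ : DirichletCharacter ℂ D} (hχ : χ ≠ 1)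
    (a b : ℕ) : ‖∑ n ∈ Ioc a b, χ n‖ ≤ 2 * √D * Real.log D := by
  set q := χ.conductor
  have q_dvd : q ∣ D := χ.conductor_dvd_level
  have : NeZero q := ⟨χ.conductor_ne_zero⟩
  have q_ne_one : q ≠ 1 := mt eq_one_iff_conductor_eq_one.2 hχ
  have card_divisors_le : (#(D / q).divisors : ℝ) ≤ 2 * √(D / q : ℕ) :=
    calc (#(D / q).divisors : ℝ) ≤ 2 * (D / q).sqrt := mod_cast card_divisors_le_two_mul_sqrt _
      _ ≤ 2 * √(D / q : ℕ) := by gcongr; exact Real.nat_sqrt_le_real_sqrt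
  have sqrt_mul_sqrt : √(D / q : ℕ) * √q = √D := by
    rw [← Real.sqrt_mul (Nat.cast_nonneg _), ← Nat.cast_mul, Nat.div_mul_cancel q_dvd]
  have log_le_log : Real.log q ≤ Real.log D :=
    Real.log_le_log (mod_cast NeZero.pos q) (mod_cast Nat.le_of_dvd (NeZero.pos D) q_dvd)
  calc ‖∑ n ∈ Ioc a b, χ n‖ = ‖∑ n ∈ Ioc a b, changeLevel q_dvd χ.primitiveCharacter n‖ := by
        rw [changeLevel_primitiveCharacter]
    _ ≤ #(D / q).divisors * (√q * Real.log q) := norm_sum_Ioc_changeLevel_le q_dvd _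
        (norm_sum_Ioc_le_of_isPrimitive χ.primitiveCharacter_isPrimitive q_ne_one) a b
    _ ≤ 2 * √(D / q : ℕ) * (√q * Real.log D) := by gcongr
    _ = 2 * √D * Real.log D := by rw [← sqrt_mul_sqrt]; ring

theorem sum_Ioc_mul_eq_sub_integral_mul {𝕜 : Type*} [RCLike 𝕜] (c : ℕ → 𝕜) {f : ℝ → 𝕜} {a b : ℝ}
    (ha : 0 ≤ a) (hab : a ≤ b) (hf_diff : ∀ t ∈ Set.Icc a b, DifferentiableAt ℝ f t)
    (hf_int : IntegrableOn (deriv f) (Set.Icc a b)) :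
    ∑ n ∈ Ioc ⌊a⌋₊ ⌊b⌋₊, f n * c n = f b * (∑ n ∈ Ioc ⌊a⌋₊ ⌊b⌋₊, c n) -
      ∫ t in Set.Ioc a b, deriv f t * ∑ n ∈ Ioc ⌊a⌋₊ ⌊t⌋₊, c n := by
  set c' : ℕ → 𝕜 := fun n ↦ if ⌊a⌋₊ < n then c n else 0
  have sum_c' (N : ℕ) : ∑ n ∈ Icc 0 N, c' n = ∑ n ∈ Ioc ⌊a⌋₊ N, c n := by
    rw [← sum_filter]
    congr 1
    ext n
    simp only [mem_filter, mem_Icc, mem_Ioc]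
    omega
  have sum_mul_c' : ∑ n ∈ Ioc ⌊a⌋₊ ⌊b⌋₊, f n * c n = ∑ n ∈ Ioc ⌊a⌋₊ ⌊b⌋₊, f n * c' n :=
    sum_congr rfl fun n hn ↦ by simp only [c', if_pos (mem_Ioc.1 hn).1]
  rw [sum_mul_c', sum_mul_eq_sub_sub_integral_mul c' ha hab hf_diff hf_int]
  simp_rw [sum_c', Ioc_self, sum_empty, mul_zero, sub_zero]

theorem norm_sum_Ioc_mul_le {𝕜 : Type*} [RCLike 𝕜] {c : ℕ → 𝕜} {f : ℝ → 𝕜} {a b B : ℝ}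
    (ha : 0 ≤ a) (hab : a ≤ b) (hB : ∀ N, ‖∑ n ∈ Ioc ⌊a⌋₊ N, c n‖ ≤ B)
    (hf_diff : ∀ t ∈ Set.Icc a b, DifferentiableAt ℝ f t)
    (hf_int : IntegrableOn (deriv f) (Set.Icc a b)) :
    ‖∑ n ∈ Ioc ⌊a⌋₊ ⌊b⌋₊, f n * c n‖ ≤ B * (‖f b‖ + ∫ t in Set.Ioc a b, ‖deriv f t‖) := by
  have integrand_le (t : ℝ) :
      ‖deriv f t * ∑ n ∈ Ioc ⌊a⌋₊ ⌊t⌋₊, c n‖ ≤ B * ‖deriv f t‖ := by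
    rw [norm_mul, mul_comm]
    gcongr
    exact hB _
  have integral_le : ‖∫ t in Set.Ioc a b, deriv f t * ∑ n ∈ Ioc ⌊a⌋₊ ⌊t⌋₊, c n‖ ≤
      ∫ t in Set.Ioc a b, B * ‖deriv f t‖ :=
    norm_integral_le_of_norm_le ((hf_int.mono_set Set.Ioc_subset_Icc_self).norm.const_mul B)
      (.of_forall integrand_le)
  rw [sum_Ioc_mul_eq_sub_integral_mul c ha hab hf_diff hf_int]
  calc ‖f b * (∑ n ∈ Ioc ⌊a⌋₊ ⌊b⌋₊, c n) -
        ∫ t in Set.Ioc a b, deriv f t * ∑ n ∈ Ioc ⌊a⌋₊ ⌊t⌋₊, c n‖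
      ≤ ‖f b‖ * B + ∫ t in Set.Ioc a b, B * ‖deriv f t‖ := by
        refine (norm_sub_le _ _).trans (add_le_add ?_ integral_le)
        rw [norm_mul]
        gcongr
        exact hB _
    _ = B * (‖f b‖ + ∫ t in Set.Ioc a b, ‖deriv f t‖) := by rw [integral_const_mul]; ring

theorem setIntegral_Ioc_rpow_neg_sub_one {σ a b : ℝ} (hσ : σ ≠ 0) (ha : 0 < a) (hab : a ≤ b) :
    ∫ t in Set.Ioc a b, t ^ (-σ - 1) = (a ^ (-σ) - b ^ (-σ)) / σ := by
  have zero_notMem : (0 : ℝ) ∉ Set.uIcc a b := fun h ↦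
    ha.not_ge (Set.uIcc_of_le hab ▸ h).1
  have ne_neg_one : -σ - 1 ≠ -1 := fun h ↦ hσ (by linarith)
  rw [← intervalIntegral.integral_of_le hab, integral_rpow (.inr ⟨ne_neg_one, zero_notMem⟩),
    sub_add_cancel, div_neg, ← neg_div, neg_sub]

theorem integrableOn_deriv_ofReal_cpow_const {r : ℂ} (hr : r ≠ 0) {a : ℝ} (ha : 0 < a) (b : ℝ) :
    IntegrableOn (deriv fun t : ℝ ↦ (t : ℂ) ^ r) (Set.Icc a b) := by
  have ne_zero {t : ℝ} (ht : t ∈ Set.Icc a b) : t ≠ 0 := (ha.trans_le ht.1).ne'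
  refine ContinuousOn.integrableOn_Icc (.congr (fun t ht ↦ ?_) fun t ht ↦
    (hasDerivAt_ofReal_cpow_const (ne_zero ht) hr).deriv)
  exact (continuousAt_const.mul (Complex.continuousAt_ofReal_cpow_const _ _
    (.inr (ne_zero ht)))).continuousWithinAt

theorem setIntegral_norm_deriv_ofReal_cpow_neg {s : ℂ} (hs : s.re ≠ 0) {a b : ℝ} (ha : 0 < a)
    (hab : a ≤ b) : ∫ t in Set.Ioc a b, ‖deriv (fun t : ℝ ↦ (t : ℂ) ^ (-s)) t‖ =
      ‖s‖ / s.re * (a ^ (-s.re) - b ^ (-s.re)) := by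
  have neg_s_ne_zero : -s ≠ 0 := fun h ↦ hs (by simp [neg_eq_zero.1 h])
  have norm_deriv {t : ℝ} (ht : t ∈ Set.Ioc a b) :
      ‖deriv (fun t : ℝ ↦ (t : ℂ) ^ (-s)) t‖ = ‖s‖ * t ^ (-s.re - 1) := by
    have t_pos : 0 < t := ha.trans ht.1
    rw [(hasDerivAt_ofReal_cpow_const t_pos.ne' neg_s_ne_zero).deriv, norm_mul, norm_neg,
      Complex.norm_cpow_eq_rpow_re_of_pos t_pos, Complex.sub_re, Complex.neg_re, Complex.one_re]
  rw [setIntegral_congr_fun measurableSet_Ioc fun t ht ↦ norm_deriv ht, integral_const_mul,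
    setIntegral_Ioc_rpow_neg_sub_one hs ha hab]
  ring

theorem norm_sum_Ioc_div_cpow_le {c : ℕ → ℂ} {s : ℂ} {z B : ℝ} (hs : 0 < s.re) (hz : 0 < z)
    (w : ℝ) (hB : ∀ N, ‖∑ n ∈ Ioc ⌊z⌋₊ N, c n‖ ≤ B) :
    ‖∑ n ∈ Ioc ⌊z⌋₊ ⌊w⌋₊, c n / (n : ℂ) ^ s‖ ≤ B * (‖s‖ / s.re) / z ^ s.re := by
  have B_nonneg : 0 ≤ B := (norm_nonneg _).trans (hB 0)
  rcases le_total w z with hwz | hzw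
  · rw [Ioc_eq_empty_of_le (Nat.floor_le_floor hwz), sum_empty, norm_zero]
    positivity
  have hw : 0 < w := hz.trans_le hzw
  have neg_s_ne_zero : -s ≠ 0 := fun h ↦ hs.ne' (by simp [neg_eq_zero.1 h])
  set f : ℝ → ℂ := fun t ↦ (t : ℂ) ^ (-s)
  have differentiableAt_f (t : ℝ) (ht : t ∈ Set.Icc z w) : DifferentiableAt ℝ f t :=
    (hasDerivAt_ofReal_cpow_const (hz.trans_le ht.1).ne' neg_s_ne_zero).differentiableAt
  have one_le : 1 ≤ ‖s‖ / s.re := (one_le_div hs).2 (Complex.re_le_norm s)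
  calc ‖∑ n ∈ Ioc ⌊z⌋₊ ⌊w⌋₊, c n / (n : ℂ) ^ s‖ = ‖∑ n ∈ Ioc ⌊z⌋₊ ⌊w⌋₊, f n * c n‖ := by
        simp only [f, Complex.cpow_neg, Complex.ofReal_natCast, div_eq_inv_mul]
    _ ≤ B * (‖f w‖ + ∫ t in Set.Ioc z w, ‖deriv f t‖) := norm_sum_Ioc_mul_le hz.le hzw hB
        differentiableAt_f (integrableOn_deriv_ofReal_cpow_const neg_s_ne_zero hz w)
    _ = B * (w ^ (-s.re) + ‖s‖ / s.re * (z ^ (-s.re) - w ^ (-s.re))) := by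
        rw [setIntegral_norm_deriv_ofReal_cpow_neg hs.ne' hz hzw,
          Complex.norm_cpow_eq_rpow_re_of_pos hw, Complex.neg_re]
    _ ≤ B * (‖s‖ / s.re * w ^ (-s.re) + ‖s‖ / s.re * (z ^ (-s.re) - w ^ (-s.re))) := by
        gcongr
        exact le_mul_of_one_le_left (by positivity) one_le
    _ = B * (‖s‖ / s.re) / z ^ s.re := by rw [Real.rpow_neg hz.le]; ring

theorem stmt14_general (D : ℕ) [NeZero D] (χ : DirichletCharacter ℂ D) (hχ : χ ≠ 1)
    (s : ℂ) (hs : 0 < s.re) (z w : ℝ) (hz : 0 < z) :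
    ‖∑ d ∈ Ioc ⌊z⌋₊ ⌊w⌋₊, χ d / (d : ℂ) ^ s‖ ≤
      2 * ‖s‖ / s.re * Real.sqrt D * Real.log D / z ^ s.re := by
  convert norm_sum_Ioc_div_cpow_le hs hz w (norm_sum_Ioc_le_of_ne_one hχ ⌊z⌋₊) using 2
  ring

/-- For a nonprincipal Dirichlet character `χ` mod `D`, `σ = Re(s) > 0`, and
`1 ≤ z < w`: `|Σ_{z < d ≤ w} χ(d)/d^s| ≤ (2 + 2|s|/σ) √D log D / z^σ`. -/
theorem stmt14 (D : ℕ) [NeZero D] (χ : DirichletCharacter ℂ D) (hχ : χ ≠ 1)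
    (s : ℂ) (hs : 0 < s.re) (z w : ℝ) (hz : 1 ≤ z) (hzw : z < w) :
    ‖∑ d ∈ Finset.Ioc ⌊z⌋₊ ⌊w⌋₊, χ d / (d : ℂ) ^ s‖ ≤
      (2 + 2 * ‖s‖ / s.re) * Real.sqrt D * Real.log D / z ^ s.re := by
  refine (stmt14_general D χ hχ s hs z w (one_pos.trans_le hz)).trans ?_
  gcongr
  exact le_add_of_nonneg_left zero_le_two
end
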